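/- Let γ be a finite Borel measure on ℝ^d with 0 < ∫ |x|² dγ(x) < ∞, and let h : (0,∞) → (0,∞) be concave and nondecreasing. Let ρ : ℝ^d → (0,∞) and w : ℝ^d → ℝ^d be measurable with ∫ |x|² ρ(x) dγ(x) < ∞. Then the first moment of |w|·γ satisfies ( ∫_{ℝ^d} |x| |w(x)| dγ(x) )² ≤ ( ∫_{ℝ^d} |w|²/h(ρ) dγ ) · m₂(γ) · h( m₂(ργ)/m₂(γ) ), where m₂(γ) := ∫ |x|² dγ and m₂(ργ) := ∫ |x|² ρ dγ. -/

import Mathlib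

open Set MeasureTheory ENNReal

/-- A concave function on the positive half-line has a supporting line at each point. -/
lemma exists_supporting_line (h : ℝ → ℝ) (hconc : ConcaveOn ℝ (Ioi 0) h) (a : ℝ) (ha : 0 < a) :
    ∃ c : ℝ, ∀ y, 0 < y → h y ≤ h a + c * (y - a) := by
  have hc : ConvexOn ℝ (Ioi 0) (-h) := hconc.neg
  have hai : a ∈ interior (Ioi (0 : ℝ)) := by simpa [interior_Ioi] using ha
  refine ⟨-(derivWithin (-h) (Ioi a) a), fun y hy => ?_⟩
  rcases lt_trichotomy y a with hya | hya | hya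
  · have h1 := hc.slope_le_leftDeriv_of_mem_interior hy hai hya
    have h2 := h1.trans (hc.leftDeriv_le_rightDeriv_of_mem_interior hai)
    rw [slope_def_field, div_le_iff₀ (by linarith)] at h2
    simp only [Pi.neg_apply] at h2
    nlinarith
  · subst hya; simp
  · have h1 := hc.rightDeriv_le_slope_of_mem_interior hai hy hya
    rw [slope_def_field, le_div_iff₀ (by linarith)] at h1
    simp only [Pi.neg_apply] at h1
    nlinarith

/-- Cauchy-Schwarz for the lower Lebesgue integral. -/
lemma lintegral_mul_sq_le {α : Type*} [MeasurableSpace α] (μ : Measure α) (f g : α → ℝ≥0∞)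
    (hf : Measurable f) (hg : Measurable g) :
    (∫⁻ x, f x * g x ∂μ) ^ 2 ≤ (∫⁻ x, f x ^ 2 ∂μ) * (∫⁻ x, g x ^ 2 ∂μ) := by
  have key := ENNReal.lintegral_mul_le_Lp_mul_Lq μ Real.HolderConjugate.two_two
    hf.aemeasurable hg.aemeasurable
  simp only [Pi.mul_apply, ENNReal.rpow_two] at key
  calc _ ≤ _ := pow_le_pow_left' key 2
    _ = _ := by
      rw [mul_pow, ← ENNReal.rpow_two, ← ENNReal.rpow_two, ← ENNReal.rpow_mul, ← ENNReal.rpow_mul]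
      norm_num

/-- First-moment estimate: for a finite measure `γ` with positive finite
second moment, a concave nondecreasing weight `h`, a positive density `ρ` with
`∫ |x|² ρ dγ < ∞`, the first moment of `|w|·γ` satisfies
`(∫ |x||w| dγ)² ≤ (∫ |w|²/h(ρ) dγ) · m₂(γ) · h(m₂(ργ)/m₂(γ))`. -/
theorem first_moment_estimate
    (d : ℕ) (γ : Measure (EuclideanSpace ℝ (Fin d))) [IsFiniteMeasure γ]
    (hm2int : Integrable (fun x : EuclideanSpace ℝ (Fin d) => ‖x‖ ^ 2) γ)
    (hm2pos : 0 < ∫ x, ‖x‖ ^ 2 ∂γ)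
    (h : ℝ → ℝ) (hconc : ConcaveOn ℝ (Ioi 0) h) (hmono : MonotoneOn h (Ioi 0))
    (hpos : ∀ x ∈ Ioi (0 : ℝ), 0 < h x)
    (ρ : EuclideanSpace ℝ (Fin d) → ℝ)
    (w : EuclideanSpace ℝ (Fin d) → EuclideanSpace ℝ (Fin d))
    (hρm : Measurable ρ) (hwm : Measurable w) (hρpos : ∀ x, 0 < ρ x)
    (hρm2int : Integrable (fun x => ‖x‖ ^ 2 * ρ x) γ) :
    (∫⁻ x, ENNReal.ofReal (‖x‖ * ‖w x‖) ∂γ) ^ 2 ≤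
      (∫⁻ x, ENNReal.ofReal (‖w x‖ ^ 2 / h (ρ x)) ∂γ) *
        ENNReal.ofReal (∫ x, ‖x‖ ^ 2 ∂γ) *
        ENNReal.ofReal (h ((∫ x, ‖x‖ ^ 2 * ρ x ∂γ) / (∫ x, ‖x‖ ^ 2 ∂γ))) := by
  have hpos2 : 0 < ∫ x, ‖x‖ ^ 2 * ρ x ∂γ := by
    rw [integral_pos_iff_support_of_nonneg (fun x => by positivity) hm2int] at hm2pos
    rw [integral_pos_iff_support_of_nonneg
      (fun x => mul_nonneg (by positivity) (hρpos x).le) hρm2int]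
    convert hm2pos using 2
    ext x
    simp [(hρpos x).ne']
  set m := ∫ x, ‖x‖ ^ 2 ∂γ with hm
  set n := ∫ x, ‖x‖ ^ 2 * ρ x ∂γ with hn
  have ha : 0 < n / m := div_pos hpos2 hm2pos
  obtain ⟨c, hc⟩ := exists_supporting_line h hconc _ ha
  set l : EuclideanSpace ℝ (Fin d) → ℝ := fun x => h (n / m) + c * (ρ x - n / m) with hl
  have hhl : ∀ x, h (ρ x) ≤ l x := fun x => hc _ (hρpos x)
  have hhp : ∀ x, 0 < h (ρ x) := fun x => hpos _ (hρpos x)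
  have hlp : ∀ x, 0 < l x := fun x => (hhp x).trans_le (hhl x)
  have hlm : Measurable l := by fun_prop
  have hexp : (fun x => ‖x‖ ^ 2 * l x) =
      fun x => (h (n / m) - c * (n / m)) * ‖x‖ ^ 2 + c * (‖x‖ ^ 2 * ρ x) := by
    funext x; simp only [hl]; ring
  have hint : Integrable (fun x => ‖x‖ ^ 2 * l x) γ := by
    rw [hexp]; exact (hm2int.const_mul _).add (hρm2int.const_mul _)
  have hval : ∫ x, ‖x‖ ^ 2 * l x ∂γ = m * h (n / m) := by
    rw [hexp, integral_add (hm2int.const_mul _) (hρm2int.const_mul _), integral_const_mul,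
      integral_const_mul, ← hm, ← hn]
    field_simp
    ring
  have hcs := lintegral_mul_sq_le γ (fun x => ENNReal.ofReal (‖w x‖ / √(l x)))
    (fun x => ENNReal.ofReal (‖x‖ * √(l x))) (by fun_prop) (by fun_prop)
  have e1 : ∀ x, ENNReal.ofReal (‖w x‖ / √(l x)) * ENNReal.ofReal (‖x‖ * √(l x)) =
      ENNReal.ofReal (‖x‖ * ‖w x‖) := fun x => by
    have := Real.sqrt_pos.2 (hlp x)
    rw [← ENNReal.ofReal_mul (by positivity)]
    congr 1
    field_simp
  have e2 : ∀ x, ENNReal.ofReal (‖w x‖ / √(l x)) ^ 2 ≤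
      ENNReal.ofReal (‖w x‖ ^ 2 / h (ρ x)) := fun x => by
    rw [← ENNReal.ofReal_pow (by positivity), div_pow, Real.sq_sqrt (hlp x).le]
    exact ENNReal.ofReal_le_ofReal
      (div_le_div_of_nonneg_left (by positivity) (hhp x) (hhl x))
  have e3 : ∀ x, ENNReal.ofReal (‖x‖ * √(l x)) ^ 2 = ENNReal.ofReal (‖x‖ ^ 2 * l x) := fun x => by
    rw [← ENNReal.ofReal_pow (by positivity), mul_pow, Real.sq_sqrt (hlp x).le]
  simp only [e1, e3] at hcs
  rw [← ofReal_integral_eq_lintegral_ofReal hint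
    (Filter.Eventually.of_forall fun x => mul_nonneg (by positivity) (hlp x).le), hval,
    ENNReal.ofReal_mul hm2pos.le, ← mul_assoc] at hcs
  refine hcs.trans ?_
  gcongr with x
  exact e2 x
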